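/- Let 1 < α₀ < ϑ₀ < 2 and c₂ ≥ 1. There exists a constant C > 0, depending only on α₀, ϑ₀, c₂ and the constant K below, such that the following holds for every integer d ≥ 1, all α, ϑ ∈ [α₀, ϑ₀], every t ∈ (0,1], every real d×d matrix A with ‖Az‖ ≤ √c₂·‖z‖ for all z ∈ ℝ^d, and every twice continuously differentiable function f : ℝ^d → ℝ satisfying ‖∇f(x)‖ ≤ K and ‖∇²f(x)‖_op ≤ K·t^{−1/α} for all x ∈ ℝ^d: for every x ∈ ℝ^d, | ℒ^α_A f(x) − ℒ^ϑ_A f(x) | ≤ C·d·|ϑ−α|·t^{−1/α}. -/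

import Mathlib

open Real MeasureTheory

/-- The constant `c_{d,α} = α·2^(α−2)·Γ((d+α)/2) / (π^(d/2)·Γ((2−α)/2))`. -/
noncomputable def stableConst (d : ℕ) (α : ℝ) : ℝ :=
  α * (2 : ℝ) ^ (α - 2) * Real.Gamma ((d + α) / 2) /
    (Real.pi ^ ((d : ℝ) / 2) * Real.Gamma ((2 - α) / 2))

/-- The nonlocal operator
`ℒ^α_A f(x) = c_{d,α} ∫ (f(x+Az) − f(x) − ⟨∇f(x), Az⟩)·‖z‖^{−(d+α)} dz`
(the integrand vanishes at `z = 0` since `‖0‖^{−(d+α)} = 0` for `rpow`). -/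
noncomputable def nonlocalOp (d : ℕ) (α : ℝ) (A : Matrix (Fin d) (Fin d) ℝ)
    (f : EuclideanSpace ℝ (Fin d) → ℝ) (x : EuclideanSpace ℝ (Fin d)) : ℝ :=
  stableConst d α * ∫ z : EuclideanSpace ℝ (Fin d),
    (f (x + Matrix.toEuclideanLin A z) - f x - fderiv ℝ f x (Matrix.toEuclideanLin A z))
      * ‖z‖ ^ (-((d : ℝ) + α))

/-- The Gamma quotient `Γ((d+s)/2)/Γ(d/2)`. -/
noncomputable def gammaRatio (d : ℕ) (s : ℝ) : ℝ :=
  Real.Gamma ((d + s) / 2) / Real.Gamma ((d : ℝ) / 2)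

theorem gammaRatio_zero {d : ℕ} (hd : 1 ≤ d) : gammaRatio d 0 = 1 := by
  have hd' : (0 : ℝ) < d := by exact_mod_cast hd
  have := Real.Gamma_pos_of_pos (half_pos hd')
  simp [gammaRatio, this.ne']

theorem gammaRatio_two {d : ℕ} (hd : 1 ≤ d) : gammaRatio d 2 = d / 2 := by
  have hd' : (0 : ℝ) < d := by exact_mod_cast hd
  have := Real.Gamma_pos_of_pos (half_pos hd')
  rw [gammaRatio, add_div, div_self two_ne_zero, Real.Gamma_add_one (half_pos hd').ne']
  field_simp

theorem gammaRatio_nonneg {d : ℕ} {s : ℝ} (hs : 0 ≤ s) : 0 ≤ gammaRatio d s :=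
  div_nonneg (Real.Gamma_nonneg_of_nonneg (by positivity))
    (Real.Gamma_nonneg_of_nonneg (by positivity))

theorem convexOn_gammaRatio {d : ℕ} (hd : 1 ≤ d) :
    ConvexOn ℝ (Set.Icc 0 2) (gammaRatio d) := by
  have hd' : (0 : ℝ) < d := by exact_mod_cast hd
  have hG := Real.Gamma_pos_of_pos (half_pos hd')
  refine ⟨convex_Icc _ _, fun x hx y hy a b ha hb hab => ?_⟩
  have hx0 : (0 : ℝ) < (d + x) / 2 := by linarith [hx.1]
  have hy0 : (0 : ℝ) < (d + y) / 2 := by linarith [hy.1]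
  have h := Real.convexOn_Gamma.2 hx0 hy0 ha hb hab
  have harg : a • (((d : ℝ) + x) / 2) + b • ((d + y) / 2) = (d + (a • x + b • y)) / 2 := by
    simp only [smul_eq_mul]
    linear_combination (d : ℝ) / 2 * hab
  rw [harg] at h
  simp only [gammaRatio, smul_eq_mul] at h ⊢
  rw [← mul_div_assoc, ← mul_div_assoc, ← add_div]
  exact div_le_div_of_nonneg_right h hG.le

theorem gammaRatio_le {d : ℕ} (hd : 1 ≤ d) {s : ℝ} (hs : s ∈ Set.Icc (0 : ℝ) 2) :
    gammaRatio d s ≤ d := by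
  have hd' : (1 : ℝ) ≤ d := by exact_mod_cast hd
  refine ((convexOn_gammaRatio hd).le_max_of_mem_Icc (by simp) (by simp) hs).trans ?_
  rw [gammaRatio_zero hd, gammaRatio_two hd]
  exact max_le hd' (by linarith)

theorem abs_gammaRatio_sub_le {d : ℕ} (hd : 1 ≤ d) {M x y : ℝ} (hM : M < 2) (hx : 1 < x)
    (hxy : x ≤ y) (hy : y ≤ M) :
    |gammaRatio d y - gammaRatio d x| ≤ d / (2 - M) * (y - x) := by
  have hd' : (1 : ℝ) ≤ d := by exact_mod_cast hd
  rcases hxy.eq_or_lt with rfl | hlt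
  · simp
  have hc := convexOn_gammaRatio hd
  have h1 := hc.slope_mono_adjacent (x := x) (y := y) (z := 2)
    ⟨by linarith, by linarith⟩ (by simp) hlt (by linarith)
  have h2 := hc.slope_mono_adjacent (x := 0) (y := x) (z := y)
    (by simp) ⟨by linarith, by linarith⟩ (by linarith) hlt
  rw [gammaRatio_two hd] at h1
  rw [gammaRatio_zero hd] at h2
  have hyx : 0 < y - x := sub_pos.2 hlt
  have hnx : 0 ≤ gammaRatio d x := gammaRatio_nonneg (by linarith)
  have hny : 0 ≤ gammaRatio d y := gammaRatio_nonneg (by linarith)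
  have h3 : ((d : ℝ) / 2 - gammaRatio d y) / (2 - y) ≤ d / (2 - M) :=
    div_le_div₀ (by linarith) (by linarith) (by linarith) (by linarith)
  have h4 : -((d : ℝ) / (2 - M)) ≤ (gammaRatio d x - 1) / (x - 0) := by
    have h5 : (1 : ℝ) ≤ d / (2 - M) := by rw [le_div_iff₀ (by linarith)]; linarith
    have h6 : -1 ≤ (gammaRatio d x - 1) / (x - 0) := by
      rw [le_div_iff₀ (by linarith)]; linarith
    linarith
  rw [abs_le]
  constructor
  · have := (le_div_iff₀ hyx).1 (h4.trans h2)
    linarith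
  · exact (div_le_iff₀ hyx).1 (h1.trans h3)

/-- The dimension-free factor of the normalised constant. -/
noncomputable def stableFactor (s : ℝ) : ℝ :=
  s * (2 : ℝ) ^ (s - 1) * (Real.Gamma ((2 - s) / 2))⁻¹

theorem contDiff_inv_Gamma : ContDiff ℝ 1 fun s : ℝ => (Real.Gamma s)⁻¹ := by
  have h : ContDiff ℂ 1 fun s : ℂ => (Complex.Gamma s)⁻¹ :=
    Complex.differentiable_one_div_Gamma.contDiff
  have h' : ContDiff ℝ 1 fun s : ℝ => ((Complex.Gamma s)⁻¹).re := h.real_of_complex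
  convert h' using 2 with s
  rw [Complex.Gamma_ofReal, ← Complex.ofReal_inv, Complex.ofReal_re]

theorem contDiff_stableFactor : ContDiff ℝ 1 stableFactor := by
  have h2 : ContDiff ℝ 1 fun s : ℝ => (2 : ℝ) ^ (s - 1) :=
    contDiff_const.rpow (contDiff_id.sub contDiff_const) fun _ => two_ne_zero
  exact (contDiff_id.mul h2).mul
    (contDiff_inv_Gamma.comp ((contDiff_const.sub contDiff_id).div_const 2))

theorem exists_stableFactor_bounds (a b : ℝ) :
    ∃ L : ℝ, 0 < L ∧ (∀ s ∈ Set.Icc a b, |stableFactor s| ≤ L) ∧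
      ∀ s ∈ Set.Icc a b, ∀ r ∈ Set.Icc a b,
        |stableFactor r - stableFactor s| ≤ L * |r - s| := by
  obtain ⟨L₁, hL₁⟩ := isCompact_Icc.exists_bound_of_continuousOn
    (contDiff_stableFactor.continuous.continuousOn (s := Set.Icc a b))
  obtain ⟨L₂, hL₂⟩ := contDiff_stableFactor.locallyLipschitz.locallyLipschitzOn
    |>.exists_lipschitzOnWith_of_compact (isCompact_Icc (a := a) (b := b))
  refine ⟨|L₁| + L₂ + 1, by positivity, fun s hs => ?_, fun s hs r hr => ?_⟩
  · have := hL₁ s hs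
    rw [Real.norm_eq_abs] at this
    linarith [le_abs_self L₁, L₂.coe_nonneg]
  · have := hL₂.dist_le_mul r hr s hs
    rw [Real.dist_eq, Real.dist_eq] at this
    refine this.trans (mul_le_mul_of_nonneg_right ?_ (abs_nonneg _))
    linarith [abs_nonneg L₁]

/-- The surface area of the unit sphere, as the polar-coordinate factor `d · |B(0,1)|`. -/
noncomputable def sphereArea (d : ℕ) : ℝ :=
  d * volume.real (Metric.ball (0 : EuclideanSpace ℝ (Fin d)) 1)

theorem sphereArea_mul_stableConst {d : ℕ} (hd : 1 ≤ d) (s : ℝ) :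
    sphereArea d * stableConst d s = stableFactor s * gammaRatio d s := by
  have hd' : (0 : ℝ) < d := by exact_mod_cast hd
  have : Nonempty (Fin d) := ⟨⟨0, hd⟩⟩
  have hG := Real.Gamma_pos_of_pos (half_pos hd')
  have hpi : √π ^ d = π ^ ((d : ℝ) / 2) := by
    rw [Real.sqrt_eq_rpow, ← Real.rpow_natCast, ← Real.rpow_mul Real.pi_pos.le]
    ring_nf
  have hpos : 0 < π ^ ((d : ℝ) / 2) := Real.rpow_pos_of_pos Real.pi_pos _
  have hvol : volume.real (Metric.ball (0 : EuclideanSpace ℝ (Fin d)) 1)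
      = π ^ ((d : ℝ) / 2) / (d / 2 * Real.Gamma (d / 2)) := by
    rw [Measure.real, EuclideanSpace.volume_ball, Fintype.card_fin, hpi,
      Real.Gamma_add_one (half_pos hd').ne']
    simp only [ENNReal.ofReal_one, one_pow, one_mul]
    exact ENNReal.toReal_ofReal (by positivity)
  have h2 : (2 : ℝ) ^ (s - 1) = 2 * 2 ^ (s - 2) := by
    rw [show s - 1 = 1 + (s - 2) by ring, Real.rpow_add two_pos, Real.rpow_one]
  rw [sphereArea, hvol, stableConst, stableFactor, gammaRatio, h2]
  field_simp

theorem stableConst_nonneg (d : ℕ) {s : ℝ} (h0 : 0 ≤ s) (h2 : s ≤ 2) : 0 ≤ stableConst d s := by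
  have h1 : 0 ≤ Real.Gamma ((d + s) / 2) := Real.Gamma_nonneg_of_nonneg (by positivity)
  have h3 : 0 ≤ Real.Gamma ((2 - s) / 2) := Real.Gamma_nonneg_of_nonneg (by linarith)
  unfold stableConst
  positivity

/-- The radial weight `r² · r^{-(d+s)}` restricted to `r ≤ 1`. -/
noncomputable def nearWeight (d : ℕ) (s r : ℝ) : ℝ :=
  if r ≤ 1 then r ^ 2 * r ^ (-((d : ℝ) + s)) else 0

/-- The radial weight `r · r^{-(d+s)}` restricted to `r > 1`. -/
noncomputable def farWeight (d : ℕ) (s r : ℝ) : ℝ :=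
  if r ≤ 1 then 0 else r * r ^ (-((d : ℝ) + s))

theorem pow_mul_nearWeight {d : ℕ} (hd : 1 ≤ d) (s : ℝ) :
    Set.EqOn (fun r : ℝ => r ^ (d - 1) • nearWeight d s r)
      ((Set.Ioc 0 1).indicator fun r => r ^ (1 - s)) (Set.Ioi 0) := by
  intro r (hr : 0 < r)
  by_cases h : r ≤ 1
  · simp only [nearWeight, h, if_true, smul_eq_mul, Set.indicator, Set.mem_Ioc, hr, and_self]
    rw [← Real.rpow_natCast, ← Real.rpow_natCast, ← Real.rpow_add hr, ← Real.rpow_add hr,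
      Nat.cast_sub hd]
    congr 1
    push_cast
    ring
  · simp [nearWeight, h]

theorem pow_mul_farWeight {d : ℕ} (hd : 1 ≤ d) (s : ℝ) :
    Set.EqOn (fun r : ℝ => r ^ (d - 1) • farWeight d s r)
      ((Set.Ioi 1).indicator fun r => r ^ (-s)) (Set.Ioi 0) := by
  intro r (hr : 0 < r)
  by_cases h : r ≤ 1
  · simp [farWeight, h]
  · have h' : 1 < r := not_le.1 h
    simp only [farWeight, h, if_false, smul_eq_mul, Set.indicator, Set.mem_Ioi, h', if_true]
    have hmul : r * r ^ (-((d : ℝ) + s)) = r ^ (1 + -((d : ℝ) + s)) := by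
      rw [Real.rpow_add hr, Real.rpow_one]
    rw [hmul, ← Real.rpow_natCast, ← Real.rpow_add hr, Nat.cast_sub hd]
    congr 1
    push_cast
    ring

theorem integrable_nearWeight {d : ℕ} (hd : 1 ≤ d) {s : ℝ} (hs : s < 2) :
    Integrable fun z : EuclideanSpace ℝ (Fin d) => nearWeight d s ‖z‖ := by
  have : Nonempty (Fin d) := ⟨⟨0, hd⟩⟩
  rw [integrable_fun_norm_addHaar, finrank_euclideanSpace_fin,
    integrableOn_congr_fun (pow_mul_nearWeight hd s) measurableSet_Ioi]
  refine ((integrable_indicator_iff measurableSet_Ioc).2 ?_).integrableOn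
  exact (intervalIntegrable_iff_integrableOn_Ioc_of_le zero_le_one).1
    (intervalIntegral.intervalIntegrable_rpow' (by linarith))

theorem integral_nearWeight {d : ℕ} (hd : 1 ≤ d) {s : ℝ} (hs : s < 2) :
    ∫ z : EuclideanSpace ℝ (Fin d), nearWeight d s ‖z‖ = sphereArea d * (2 - s)⁻¹ := by
  have : Nonempty (Fin d) := ⟨⟨0, hd⟩⟩
  rw [integral_fun_norm_addHaar, finrank_euclideanSpace_fin,
    setIntegral_congr_fun measurableSet_Ioi (pow_mul_nearWeight hd s),
    setIntegral_indicator measurableSet_Ioc,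
    Set.inter_eq_self_of_subset_right Set.Ioc_subset_Ioi_self,
    ← intervalIntegral.integral_of_le zero_le_one, integral_rpow (Or.inl (by linarith)),
    Real.one_rpow, Real.zero_rpow (by linarith), sphereArea, nsmul_eq_mul, smul_eq_mul]
  ring

theorem integrable_farWeight {d : ℕ} (hd : 1 ≤ d) {s : ℝ} (hs : 1 < s) :
    Integrable fun z : EuclideanSpace ℝ (Fin d) => farWeight d s ‖z‖ := by
  have : Nonempty (Fin d) := ⟨⟨0, hd⟩⟩
  rw [integrable_fun_norm_addHaar, finrank_euclideanSpace_fin,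
    integrableOn_congr_fun (pow_mul_farWeight hd s) measurableSet_Ioi]
  exact ((integrable_indicator_iff measurableSet_Ioi).2
    (integrableOn_Ioi_rpow_of_lt (by linarith) one_pos)).integrableOn

theorem integral_farWeight {d : ℕ} (hd : 1 ≤ d) {s : ℝ} (hs : 1 < s) :
    ∫ z : EuclideanSpace ℝ (Fin d), farWeight d s ‖z‖ = sphereArea d * (s - 1)⁻¹ := by
  have : Nonempty (Fin d) := ⟨⟨0, hd⟩⟩
  rw [integral_fun_norm_addHaar, finrank_euclideanSpace_fin,
    setIntegral_congr_fun measurableSet_Ioi (pow_mul_farWeight hd s),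
    setIntegral_indicator measurableSet_Ioi,
    Set.inter_eq_self_of_subset_right (Set.Ioi_subset_Ioi zero_le_one),
    integral_Ioi_rpow_of_lt (by linarith) one_pos,
    Real.one_rpow, sphereArea, nsmul_eq_mul, smul_eq_mul,
    show -s + 1 = -(s - 1) by ring, neg_div_neg_eq, one_div]
  ring

/-- First-order Taylor remainder bounds from a gradient bound and a Hessian bound. -/
theorem abs_taylor_remainder_le {E : Type*} [NormedAddCommGroup E] [NormedSpace ℝ E]
    {f : E → ℝ} (hf : ContDiff ℝ 2 f) {K H : ℝ}
    (hK : ∀ x, ‖fderiv ℝ f x‖ ≤ K) (hH : ∀ x, ‖iteratedFDeriv ℝ 2 f x‖ ≤ H) (x h : E) :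
    |f (x + h) - f x - fderiv ℝ f x h| ≤ 2 * K * ‖h‖ ∧
      |f (x + h) - f x - fderiv ℝ f x h| ≤ H * ‖h‖ ^ 2 := by
  have hd : Differentiable ℝ f := hf.differentiable (by norm_num)
  have hd' : Differentiable ℝ (fderiv ℝ f) :=
    (hf.fderiv_right (m := 1) (by norm_num)).differentiable (by norm_num)
  have hlip : ∀ y, ‖fderiv ℝ f y - fderiv ℝ f x‖ ≤ H * ‖y - x‖ := fun y =>
    convex_univ.norm_image_sub_le_of_norm_fderiv_le (fun z _ => hd' z)
      (fun z _ => by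
        rw [← norm_iteratedFDeriv_one, norm_iteratedFDeriv_fderiv]; exact hH z)
      (Set.mem_univ x) (Set.mem_univ y)
  have hH0 : 0 ≤ H := (norm_nonneg _).trans (hH x)
  constructor
  · have := convex_univ.norm_image_sub_le_of_norm_hasFDerivWithin_le' (φ := fderiv ℝ f x)
      (C := 2 * K) (fun z _ => (hd z).hasFDerivAt.hasFDerivWithinAt)
      (fun z _ => (norm_sub_le _ _).trans (by linarith [hK z, hK x]))
      (Set.mem_univ x) (Set.mem_univ (x + h))
    simpa using this
  · have := (convex_closedBall x ‖h‖).norm_image_sub_le_of_norm_hasFDerivWithin_le'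
      (φ := fderiv ℝ f x) (C := H * ‖h‖)
      (fun z _ => (hd z).hasFDerivAt.hasFDerivWithinAt)
      (fun z hz => (hlip z).trans (mul_le_mul_of_nonneg_left
        (by simpa [dist_eq_norm] using hz) hH0))
      (x := x) (y := x + h) (by simp) (by simp)
    simpa [pow_two, mul_assoc] using this

section RadialComparison

variable {d : ℕ} {g : EuclideanSpace ℝ (Fin d) → ℝ} {B : ℝ}

theorem abs_mul_rpow_le_weights (h1 : ∀ z, |g z| ≤ B * ‖z‖) (h2 : ∀ z, |g z| ≤ B * ‖z‖ ^ 2)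
    (s : ℝ) (z : EuclideanSpace ℝ (Fin d)) :
    |g z * ‖z‖ ^ (-((d : ℝ) + s))| ≤ B * (nearWeight d s ‖z‖ + farWeight d s ‖z‖) := by
  have hw : 0 ≤ ‖z‖ ^ (-((d : ℝ) + s)) := Real.rpow_nonneg (norm_nonneg z) _
  rw [abs_mul, abs_of_nonneg hw]
  by_cases h : ‖z‖ ≤ 1
  · simpa [nearWeight, farWeight, h, mul_assoc] using mul_le_mul_of_nonneg_right (h2 z) hw
  · simpa [nearWeight, farWeight, h, mul_assoc] using mul_le_mul_of_nonneg_right (h1 z) hw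

theorem abs_mul_rpow_sub_le_weights (hd : 1 ≤ d) (h1 : ∀ z, |g z| ≤ B * ‖z‖)
    (h2 : ∀ z, |g z| ≤ B * ‖z‖ ^ 2) {α ϑ : ℝ} (hα : 1 < α) (hαϑ : α ≤ ϑ)
    (z : EuclideanSpace ℝ (Fin d)) :
    |g z * ‖z‖ ^ (-((d : ℝ) + α)) - g z * ‖z‖ ^ (-((d : ℝ) + ϑ))| ≤
      B * (nearWeight d ϑ ‖z‖ - nearWeight d α ‖z‖ +
        (farWeight d α ‖z‖ - farWeight d ϑ ‖z‖)) := by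
  have hd' : (1 : ℝ) ≤ d := by exact_mod_cast hd
  rw [← mul_sub, abs_mul]
  by_cases h : ‖z‖ ≤ 1
  · have hw : ‖z‖ ^ (-((d : ℝ) + α)) ≤ ‖z‖ ^ (-((d : ℝ) + ϑ)) := by
      rcases (norm_nonneg z).eq_or_lt with h0 | h0
      · rw [← h0, Real.zero_rpow (by linarith), Real.zero_rpow (by linarith)]
      · exact Real.rpow_le_rpow_of_exponent_ge h0 h (by linarith)
    rw [abs_of_nonpos (sub_nonpos.2 hw), neg_sub]
    refine (mul_le_mul_of_nonneg_right (h2 z) (sub_nonneg.2 hw)).trans_eq ?_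
    simp only [nearWeight, farWeight, h, if_true]
    ring
  · have hw : ‖z‖ ^ (-((d : ℝ) + ϑ)) ≤ ‖z‖ ^ (-((d : ℝ) + α)) :=
      Real.rpow_le_rpow_of_exponent_le (not_le.1 h).le (by linarith)
    rw [abs_of_nonneg (sub_nonneg.2 hw)]
    refine (mul_le_mul_of_nonneg_right (h1 z) (sub_nonneg.2 hw)).trans_eq ?_
    simp only [nearWeight, farWeight, h, if_false]
    ring

theorem integrable_mul_rpow (hd : 1 ≤ d) (hg : Continuous g) (h1 : ∀ z, |g z| ≤ B * ‖z‖)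
    (h2 : ∀ z, |g z| ≤ B * ‖z‖ ^ 2) {s : ℝ} (hs1 : 1 < s) (hs2 : s < 2) :
    Integrable fun z => g z * ‖z‖ ^ (-((d : ℝ) + s)) := by
  refine (((integrable_nearWeight hd hs2).add (integrable_farWeight hd hs1)).const_mul B).mono'
    ?_ (Filter.Eventually.of_forall (abs_mul_rpow_le_weights h1 h2 s))
  exact (hg.measurable.mul (measurable_norm.pow_const _)).aestronglyMeasurable

theorem abs_integral_mul_rpow_le (hd : 1 ≤ d) (h1 : ∀ z, |g z| ≤ B * ‖z‖)
    (h2 : ∀ z, |g z| ≤ B * ‖z‖ ^ 2) {s : ℝ} (hs1 : 1 < s) (hs2 : s < 2) :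
    |∫ z, g z * ‖z‖ ^ (-((d : ℝ) + s))| ≤
      B * (sphereArea d * ((2 - s)⁻¹ + (s - 1)⁻¹)) := by
  have hn := integrable_nearWeight hd hs2
  have hf := integrable_farWeight hd hs1
  refine (norm_integral_le_of_norm_le (f := fun z => g z * ‖z‖ ^ (-((d : ℝ) + s)))
    ((hn.add hf).const_mul B)
    (Filter.Eventually.of_forall (abs_mul_rpow_le_weights h1 h2 s))).trans_eq ?_
  rw [integral_const_mul, integral_add' hn hf, integral_nearWeight hd hs2,
    integral_farWeight hd hs1]
  ring

theorem abs_integral_mul_rpow_sub_le (hd : 1 ≤ d) (hg : Continuous g)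
    (h1 : ∀ z, |g z| ≤ B * ‖z‖) (h2 : ∀ z, |g z| ≤ B * ‖z‖ ^ 2) {α ϑ : ℝ} (hα : 1 < α)
    (hαϑ : α ≤ ϑ) (hϑ : ϑ < 2) :
    |(∫ z, g z * ‖z‖ ^ (-((d : ℝ) + α))) - ∫ z, g z * ‖z‖ ^ (-((d : ℝ) + ϑ))| ≤
      B * (sphereArea d * ((2 - ϑ)⁻¹ - (2 - α)⁻¹ + ((α - 1)⁻¹ - (ϑ - 1)⁻¹))) := by
  have hα2 : α < 2 := by linarith
  have hϑ1 : 1 < ϑ := by linarith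
  have hnα := integrable_nearWeight hd hα2
  have hnϑ := integrable_nearWeight hd hϑ
  have hfα := integrable_farWeight hd hα
  have hfϑ := integrable_farWeight hd hϑ1
  rw [← integral_sub (integrable_mul_rpow hd hg h1 h2 hα hα2)
    (integrable_mul_rpow hd hg h1 h2 hϑ1 hϑ)]
  refine (norm_integral_le_of_norm_le
    (f := fun z => g z * ‖z‖ ^ (-((d : ℝ) + α)) - g z * ‖z‖ ^ (-((d : ℝ) + ϑ)))
    (((hnϑ.sub hnα).add (hfα.sub hfϑ)).const_mul B)
    (Filter.Eventually.of_forall (abs_mul_rpow_sub_le_weights hd h1 h2 hα hαϑ))).trans_eq ?_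
  rw [integral_const_mul, integral_add' (hnϑ.sub hnα) (hfα.sub hfϑ), integral_sub' hnϑ hnα,
    integral_sub' hfα hfϑ, integral_nearWeight hd hα2, integral_nearWeight hd hϑ,
    integral_farWeight hd hα, integral_farWeight hd hϑ1]
  ring

end RadialComparison

theorem inv_sub_inv_le {a b q : ℝ} (ha : 0 < a) (hab : a ≤ b) (hq : a⁻¹ ≤ q) :
    a⁻¹ - b⁻¹ ≤ q ^ 2 * (b - a) := by
  have hb : 0 < b := ha.trans_le hab
  have hb' : b⁻¹ ≤ q := (inv_anti₀ ha hab).trans hq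
  have hmul : a⁻¹ * b⁻¹ ≤ q ^ 2 := by
    rw [pow_two]
    exact mul_le_mul hq hb' (inv_nonneg.2 hb.le) ((inv_nonneg.2 ha.le).trans hq)
  calc a⁻¹ - b⁻¹ = a⁻¹ * b⁻¹ * (b - a) := by field_simp
    _ ≤ _ := mul_le_mul_of_nonneg_right hmul (sub_nonneg.2 hab)

theorem sphereArea_nonneg (d : ℕ) : 0 ≤ sphereArea d := by
  unfold sphereArea
  positivity

/-- Lipschitz dependence on the index of the normalised radial integrals, uniformly over
functions with a linear and a quadratic bound. -/
theorem exists_radial_comparison {α₀ ϑ₀ : ℝ} (hα₀ : 1 < α₀) (hϑ₀ : ϑ₀ < 2) :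
    ∃ C > 0, ∀ (d : ℕ), 1 ≤ d → ∀ α ∈ Set.Icc α₀ ϑ₀, ∀ ϑ ∈ Set.Icc α₀ ϑ₀,
      ∀ (g : EuclideanSpace ℝ (Fin d) → ℝ) (B : ℝ), 0 ≤ B → Continuous g →
        (∀ z, |g z| ≤ B * ‖z‖) → (∀ z, |g z| ≤ B * ‖z‖ ^ 2) →
        |stableConst d α * (∫ z, g z * ‖z‖ ^ (-((d : ℝ) + α))) -
          stableConst d ϑ * ∫ z, g z * ‖z‖ ^ (-((d : ℝ) + ϑ))| ≤ C * B * d * |ϑ - α| := by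
  obtain ⟨L, hL, hLb, hLl⟩ := exists_stableFactor_bounds α₀ ϑ₀
  obtain ⟨p, hp⟩ : ∃ p, p = (α₀ - 1)⁻¹ := ⟨_, rfl⟩
  obtain ⟨q, hq⟩ : ∃ q, q = (2 - ϑ₀)⁻¹ := ⟨_, rfl⟩
  have hp0 : 0 < p := hp ▸ inv_pos.2 (by linarith)
  have hq0 : 0 < q := hq ▸ inv_pos.2 (by linarith)
  refine ⟨L * (q ^ 2 + p ^ 2) + L * (1 + q) * (q + p), by positivity, ?_⟩
  intro d hd α hα ϑ hϑ g B hB hg h1 h2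
  wlog hαϑ : α ≤ ϑ generalizing α ϑ
  · rw [abs_sub_comm, abs_sub_comm ϑ α]
    exact this ϑ hϑ α hα (not_le.1 hαϑ).le
  have hα1 : 1 < α := by linarith [hα.1]
  have hϑ2 : ϑ < 2 := by linarith [hϑ.2]
  have hα2 : α < 2 := by linarith
  have hϑ1 : 1 < ϑ := by linarith
  have hS := sphereArea_nonneg d
  have hδ : 0 ≤ ϑ - α := sub_nonneg.2 hαϑ
  have hd0 : (0 : ℝ) ≤ d := Nat.cast_nonneg d
  have hqϑ : (2 - ϑ)⁻¹ ≤ q := hq ▸ inv_anti₀ (by linarith) (by linarith [hϑ.2])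
  have hpα : (α - 1)⁻¹ ≤ p := hp ▸ inv_anti₀ (by linarith) (by linarith [hα.1])
  have hpϑ : (ϑ - 1)⁻¹ ≤ p := hp ▸ inv_anti₀ (by linarith) (by linarith [hϑ.1])
  have hdiff : (2 - ϑ)⁻¹ - (2 - α)⁻¹ + ((α - 1)⁻¹ - (ϑ - 1)⁻¹) ≤ (q ^ 2 + p ^ 2) * (ϑ - α) := by
    have e1 := inv_sub_inv_le (b := 2 - α) (by linarith) (by linarith) hqϑ
    have e2 := inv_sub_inv_le (b := ϑ - 1) (by linarith) (by linarith) hpα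
    nlinarith
  have hcα : 0 ≤ stableConst d α := stableConst_nonneg d (by linarith) hα2.le
  have hNα : sphereArea d * stableConst d α ≤ L * d := by
    rw [sphereArea_mul_stableConst hd]
    exact mul_le_mul ((le_abs_self _).trans (hLb α hα))
      (gammaRatio_le hd ⟨by linarith, hα2.le⟩) (gammaRatio_nonneg (by linarith)) hL.le
  have hNsub : |sphereArea d * stableConst d α - sphereArea d * stableConst d ϑ| ≤
      L * (1 + q) * d * (ϑ - α) := by
    rw [sphereArea_mul_stableConst hd, sphereArea_mul_stableConst hd,
      show stableFactor α * gammaRatio d α - stableFactor ϑ * gammaRatio d ϑ =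
        (stableFactor α - stableFactor ϑ) * gammaRatio d α +
          stableFactor ϑ * (gammaRatio d α - gammaRatio d ϑ) by ring]
    refine (abs_add_le _ _).trans ?_
    rw [abs_mul, abs_mul, abs_of_nonneg (gammaRatio_nonneg (d := d) (by linarith : 0 ≤ α)),
      abs_sub_comm (gammaRatio d α)]
    have e1 : |stableFactor α - stableFactor ϑ| ≤ L * (ϑ - α) := by
      rw [abs_sub_comm, ← abs_of_nonneg hδ]
      exact hLl α hα ϑ hϑ
    have e2 : |gammaRatio d ϑ - gammaRatio d α| ≤ d * q * (ϑ - α) := by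
      rw [hq, ← div_eq_mul_inv]
      exact abs_gammaRatio_sub_le hd hϑ₀ hα1 hαϑ hϑ.2
    have e3 := mul_le_mul e1 (gammaRatio_le hd ⟨by linarith, hα2.le⟩)
      (gammaRatio_nonneg (by linarith)) (by positivity)
    have e4 := mul_le_mul (hLb ϑ hϑ) e2 (abs_nonneg _) hL.le
    linarith
  have hI := abs_integral_mul_rpow_le hd h1 h2 hϑ1 hϑ2
  have hIsub := abs_integral_mul_rpow_sub_le hd hg h1 h2 hα1 hαϑ hϑ2
  rw [abs_of_nonneg hδ]
  set Iα := ∫ z, g z * ‖z‖ ^ (-((d : ℝ) + α))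
  set Iϑ := ∫ z, g z * ‖z‖ ^ (-((d : ℝ) + ϑ))
  rw [show stableConst d α * Iα - stableConst d ϑ * Iϑ =
    stableConst d α * (Iα - Iϑ) + (stableConst d α - stableConst d ϑ) * Iϑ by ring]
  have hfirst : |stableConst d α * (Iα - Iϑ)| ≤
      B * (L * d) * ((q ^ 2 + p ^ 2) * (ϑ - α)) := by
    rw [abs_mul, abs_of_nonneg hcα]
    calc _ ≤ stableConst d α * (B * (sphereArea d * ((q ^ 2 + p ^ 2) * (ϑ - α)))) := by
          refine mul_le_mul_of_nonneg_left (hIsub.trans ?_) hcα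
          gcongr
      _ = B * (sphereArea d * stableConst d α) * ((q ^ 2 + p ^ 2) * (ϑ - α)) := by ring
      _ ≤ _ := by gcongr
  have hsecond : |(stableConst d α - stableConst d ϑ) * Iϑ| ≤
      B * (L * (1 + q) * d * (ϑ - α)) * (q + p) := by
    rw [abs_mul]
    calc _ ≤ |stableConst d α - stableConst d ϑ| * (B * (sphereArea d * (q + p))) := by
          refine mul_le_mul_of_nonneg_left (hI.trans ?_) (abs_nonneg _)
          gcongr
      _ = B * |sphereArea d * stableConst d α - sphereArea d * stableConst d ϑ| * (q + p) := by
          rw [← mul_sub, abs_mul, abs_of_nonneg hS]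
          ring
      _ ≤ _ := by gcongr
  refine (abs_add_le _ _).trans ((add_le_add hfirst hsecond).trans_eq ?_)
  ring

theorem stmt1 (α₀ ϑ₀ c₂ K : ℝ) (hα₀ : 1 < α₀) (hα₀ϑ₀ : α₀ < ϑ₀) (hϑ₀ : ϑ₀ < 2)
    (hc₂ : 1 ≤ c₂) :
    ∃ C > 0, ∀ (d : ℕ), 1 ≤ d → ∀ α ∈ Set.Icc α₀ ϑ₀, ∀ ϑ ∈ Set.Icc α₀ ϑ₀,
      ∀ t ∈ Set.Ioc (0 : ℝ) 1,
      ∀ A : Matrix (Fin d) (Fin d) ℝ,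
        (∀ z : EuclideanSpace ℝ (Fin d),
          ‖Matrix.toEuclideanLin A z‖ ≤ Real.sqrt c₂ * ‖z‖) →
      ∀ f : EuclideanSpace ℝ (Fin d) → ℝ, ContDiff ℝ 2 f →
        (∀ x, ‖fderiv ℝ f x‖ ≤ K) →
        (∀ x, ‖iteratedFDeriv ℝ 2 f x‖ ≤ K * t ^ (-α⁻¹)) →
      ∀ x : EuclideanSpace ℝ (Fin d),
        |nonlocalOp d α A f x - nonlocalOp d ϑ A f x|
          ≤ C * d * |ϑ - α| * t ^ (-α⁻¹) := by
  obtain ⟨C, hC, hcomp⟩ := exists_radial_comparison hα₀ hϑ₀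
  have hc₂0 : 0 < c₂ := by linarith
  refine ⟨C * (2 * |K| * c₂ + 1), by positivity, ?_⟩
  intro d hd α hα ϑ hϑ t ht A hA f hf hK hH x
  have hK0 : 0 ≤ K := (norm_nonneg _).trans (hK x)
  have hα0 : 0 < α := by linarith [hα.1]
  have hT : 1 ≤ t ^ (-α⁻¹) :=
    Real.one_le_rpow_of_pos_of_le_one_of_nonpos ht.1 ht.2 (neg_nonpos.2 (inv_nonneg.2 hα0.le))
  set T := t ^ (-α⁻¹)
  have hsq : √c₂ ≤ c₂ := Real.sqrt_le_iff.2 ⟨hc₂0.le, by nlinarith⟩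
  have hcont : Continuous fun z : EuclideanSpace ℝ (Fin d) => Matrix.toEuclideanLin A z :=
    LinearMap.continuous_of_finiteDimensional _
  have hg : Continuous fun z : EuclideanSpace ℝ (Fin d) =>
      f (x + Matrix.toEuclideanLin A z) - f x - fderiv ℝ f x (Matrix.toEuclideanLin A z) :=
    ((hf.continuous.comp (continuous_const.add hcont)).sub continuous_const).sub
      ((fderiv ℝ f x).continuous.comp hcont)
  have hbound := hcomp d hd α hα ϑ hϑ _ (2 * K * c₂ * T) (by positivity) hg
    (fun z => by
      refine (abs_taylor_remainder_le hf hK hH x _).1.trans ?_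
      calc 2 * K * ‖Matrix.toEuclideanLin A z‖ ≤ 2 * K * (c₂ * ‖z‖) := by
            gcongr
            exact (hA z).trans (by gcongr)
        _ = 2 * K * c₂ * 1 * ‖z‖ := by ring
        _ ≤ _ := by gcongr)
    (fun z => by
      refine (abs_taylor_remainder_le hf hK hH x _).2.trans ?_
      calc K * T * ‖Matrix.toEuclideanLin A z‖ ^ 2 ≤ K * T * (√c₂ * ‖z‖) ^ 2 := by
            gcongr
            exact hA z
        _ = 1 * (K * T * c₂ * ‖z‖ ^ 2) := by
            rw [mul_pow, Real.sq_sqrt hc₂0.le]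
            ring
        _ ≤ 2 * (K * T * c₂ * ‖z‖ ^ 2) := by gcongr; norm_num
        _ = _ := by ring)
  refine hbound.trans ?_
  rw [abs_of_nonneg hK0]
  calc C * (2 * K * c₂ * T) * d * |ϑ - α| = C * (2 * K * c₂) * d * |ϑ - α| * T := by ring
    _ ≤ _ := by
      gcongr
      linarith
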